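/- arXiv:2409.05798 — 2 statements merged into one kernel-verified Lean document; each statement's English description precedes it below -/
import Mathlib

section
/- For all real u ≠ 0 and a > 0, the quantity V(u) = (a/u³)·(exp(4au) - 1 - 4au·exp(2au))/(exp(2au)+1)² is strictly positive, and its limit as u → 0 equals 2a⁴/3. -/
open Filter

lemma numer_eq (x : ℝ) : Real.exp (2 * x) - 1 - 2 * x * Real.exp x
    = 2 * Real.exp x * (Real.sinh x - x) := by
  have h1 : Real.exp (2 * x) = Real.exp x * Real.exp x := by rw [← Real.exp_add]; ring_nf
  have h2 : Real.exp x * Real.exp (-x) = 1 := by rw [← Real.exp_add]; simp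
  rw [h1, Real.sinh_eq]
  linear_combination h2

lemma sinh_div_pos (x : ℝ) (hx : x ≠ 0) : 0 < (Real.sinh x - x) / x ^ 3 := by
  rcases lt_or_gt_of_ne hx with h | h
  · have := Real.sinh_lt_self_iff.2 h
    exact div_pos_of_neg_of_neg (by linarith) (Odd.pow_neg (by decide) h)
  · have := Real.self_lt_sinh_iff.2 h
    exact div_pos (by linarith) (by positivity)

lemma sinh_bound (x : ℝ) (hx : |x| ≤ 1) : |Real.sinh x - x - x ^ 3 / 6| ≤ |x| ^ 4 := by
  have h1 := Real.exp_bound hx (n := 4) (by norm_num)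
  have h2 := Real.exp_bound (x := -x) (by simpa using hx) (n := 4) (by norm_num)
  rw [abs_neg] at h2
  norm_num [Finset.sum_range_succ, Nat.factorial] at h1 h2
  rw [Real.sinh_eq]
  have h0 : 0 ≤ x ^ 4 := by positivity
  have h4 : |x| ^ 4 = x ^ 4 := Even.pow_abs (by decide) x
  try rw [h4] at h1 h2
  rw [h4]
  rw [abs_le] at *
  constructor <;> nlinarith [h1.1, h1.2, h2.1, h2.2]

lemma sinh_lim : Tendsto (fun x : ℝ => (Real.sinh x - x) / x ^ 3)
    (nhdsWithin 0 {0}ᶜ) (nhds (1 / 6)) := by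
  rw [tendsto_iff_norm_sub_tendsto_zero]
  have hl : Tendsto (fun x : ℝ => |x|) (nhdsWithin 0 {0}ᶜ) (nhds 0) := by
    have : Tendsto (fun x : ℝ => |x|) (nhds 0) (nhds |0|) := continuous_abs.tendsto 0
    rw [abs_zero] at this
    exact this.mono_left nhdsWithin_le_nhds
  refine squeeze_zero' (Eventually.of_forall fun _ => norm_nonneg _) ?_ hl
  filter_upwards [self_mem_nhdsWithin, hl.eventually (ge_mem_nhds one_pos)] with x hx hx1
  have hx0 : x ≠ 0 := hx
  have hp : 0 < |x| := abs_pos.2 hx0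
  have e : (Real.sinh x - x) / x ^ 3 - 1 / 6 = (Real.sinh x - x - x ^ 3 / 6) / x ^ 3 := by
    field_simp
  rw [e, Real.norm_eq_abs, abs_div, abs_pow, div_le_iff₀ (by positivity)]
  calc _ ≤ |x| ^ 4 := sinh_bound x hx1
    _ = _ := by ring

lemma V_eq (a : ℝ) (ha : 0 < a) (u : ℝ) (hu : u ≠ 0) :
    (a / u ^ 3) * (Real.exp (4 * a * u) - 1 - 4 * a * u * Real.exp (2 * a * u)) /
        (Real.exp (2 * a * u) + 1) ^ 2 =
    (16 * a ^ 4 * Real.exp (2 * a * u) / (Real.exp (2 * a * u) + 1) ^ 2) *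
      ((Real.sinh (2 * a * u) - 2 * a * u) / (2 * a * u) ^ 3) := by
  have h := numer_eq (2 * a * u)
  have e1 : 4 * a * u = 2 * (2 * a * u) := by ring
  rw [e1, h]
  have : Real.exp (2 * a * u) + 1 ≠ 0 := by positivity
  field_simp
  ring

theorem stmt_7 (a : ℝ) (ha : 0 < a) :
    (∀ u : ℝ, u ≠ 0 →
      0 < (a / u ^ 3) * (Real.exp (4 * a * u) - 1 - 4 * a * u * Real.exp (2 * a * u)) /
        (Real.exp (2 * a * u) + 1) ^ 2) ∧
    Tendsto (fun u : ℝ =>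
        (a / u ^ 3) * (Real.exp (4 * a * u) - 1 - 4 * a * u * Real.exp (2 * a * u)) /
          (Real.exp (2 * a * u) + 1) ^ 2)
      (nhdsWithin 0 {0}ᶜ) (nhds (2 * a ^ 4 / 3)) := by
  constructor
  · intro u hu
    rw [V_eq a ha u hu]
    exact mul_pos (by positivity) (sinh_div_pos _ (by positivity))
  · have hc : Continuous (fun u : ℝ =>
        16 * a ^ 4 * Real.exp (2 * a * u) / (Real.exp (2 * a * u) + 1) ^ 2) := by
      refine Continuous.div (by fun_prop) (by fun_prop) fun u => by positivity
    have h1 := (hc.tendsto 0).mono_left (nhdsWithin_le_nhds (s := {0}ᶜ))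
    have h2 : Tendsto (fun u : ℝ => 2 * a * u) (nhdsWithin 0 {0}ᶜ) (nhdsWithin 0 {0}ᶜ) := by
      refine tendsto_nhdsWithin_iff.2 ⟨?_, ?_⟩
      · have : Continuous (fun u : ℝ => 2 * a * u) := by fun_prop
        have h := this.tendsto 0
        rw [mul_zero] at h
        exact h.mono_left nhdsWithin_le_nhds
      · filter_upwards [self_mem_nhdsWithin] with u hu
        have hu0 : u ≠ 0 := hu
        have : 2 * a * u ≠ 0 := by positivity
        exact this
    have h3 := h1.mul (sinh_lim.comp h2)
    have e : 16 * a ^ 4 * Real.exp (2 * a * 0) / (Real.exp (2 * a * 0) + 1) ^ 2 * (1 / 6)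
        = 2 * a ^ 4 / 3 := by
      rw [mul_zero, Real.exp_zero]; ring
    rw [e] at h3
    refine h3.congr' ?_
    filter_upwards [self_mem_nhdsWithin] with u hu
    exact (V_eq a ha u hu).symm
end

section
/- For all real y, the function g(y) = (1 − exp(2y) + 2y·exp(y))/(1 + exp(y))² satisfies: g(y) < 0 for y > 0, g(y) > 0 for y < 0, and g(0) = 0. -/
theorem num_eq (y : ℝ) : 1 - Real.exp (2 * y) + 2 * y * Real.exp y
    = 2 * Real.exp y * (y - Real.sinh y) := by
  have h1 : Real.exp (2 * y) = Real.exp y * Real.exp y := by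
    rw [← Real.exp_add]; ring_nf
  have h2 : Real.exp y * Real.exp (-y) = 1 := by
    rw [← Real.exp_add]; simp
  rw [Real.sinh_eq, h1]
  linear_combination -h2

theorem stmt_18 :
    (∀ y : ℝ, 0 < y →
      (1 - Real.exp (2 * y) + 2 * y * Real.exp y) / (1 + Real.exp y) ^ 2 < 0) ∧
    (∀ y : ℝ, y < 0 →
      0 < (1 - Real.exp (2 * y) + 2 * y * Real.exp y) / (1 + Real.exp y) ^ 2) ∧
    (1 - Real.exp (2 * 0) + 2 * 0 * Real.exp 0) / (1 + Real.exp 0) ^ 2 = 0 := by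
  refine ⟨fun y hy => ?_, fun y hy => ?_, by simp⟩
  · rw [num_eq]
    have h := Real.self_lt_sinh_iff.2 hy
    exact div_neg_of_neg_of_pos
      (mul_neg_of_pos_of_neg (by positivity) (by linarith)) (by positivity)
  · rw [num_eq]
    have h := Real.sinh_lt_self_iff.2 hy
    exact div_pos (mul_pos (by positivity) (by linarith)) (by positivity)
end
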